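/- Let b > 0, let q : ℝ → ℂ be continuous on [−b,b], let f solve f'' − q f = 0 on [−b,b] with f(0) = 1, f'(0) = 0, and assume f(x) ≠ 0 for all x ∈ [−b,b]. Then there exists a continuous function K on {(x,t) : |t| ≤ |x| ≤ b} such that (i) for every twice continuously differentiable u : [−b,b] → ℂ, the function (Tu)(x) = u(x) + ∫_{−x}^{x} K(x,t)u(t)dt satisfies (Tu)'' − q·(Tu) = T(u'') on [−b,b], and (ii) for every integer k ≥ 0 and every x ∈ [−b,b], x^k + ∫_{−x}^{x} K(x,t) t^k dt = φ_k(x); that is, T maps x^k to the formal power φ_k. -/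

import Mathlib

/-!
In the characteristic coordinates `ξ = (x + t) / 2`, `η = (x - t) / 2` the transmutation kernel is
the solution `H` of the Goursat problem `∂η ∂ξ H = q (ξ + η) H`, `H (ξ, 0) = ½ ∫₀^ξ q`,
`H (0, η) = 0`, which is the fixed point of a contraction in a weighted supremum norm. As `q` is
only continuous, `H` need not be twice differentiable; `T u` nevertheless is, because each
differentiation in `x` falls on one characteristic variable of `H` and on `u`. This yields
`(T u)'' = q T u + T u''`. By induction on `k`, both `T (x ^ k)` and `φ_k` then solve
`v'' = q v + k (k - 1) φ_(k-2)` with the same data at `0`, so they coincide.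

The derivatives at `± b` are two-sided although `u` is not even assumed measurable beyond `± b`; the
kernel is extended there by reflection, so that the integral only sees the values of `u` on
`[-b, b]` and remains differentiable.
-/

open MeasureTheory Set Filter Finset Complex Topology

noncomputable section

/-- The iterated integrals X⁽ⁿ⁾: X⁽⁰⁾ ≡ 1, X⁽ⁿ⁾(x) = n ∫₀ˣ X⁽ⁿ⁻¹⁾(s) (f(s)²)^((−1)ⁿ) ds. -/
def formalX (f : ℝ → ℂ) : ℕ → ℝ → ℂ
  | 0 => fun _ => 1
  | n + 1 => fun x =>
      (n + 1 : ℂ) * ∫ s in (0:ℝ)..x, formalX f n s * ((f s) ^ 2) ^ ((-1 : ℤ) ^ (n + 1))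

/-- The iterated integrals X̃⁽ⁿ⁾: X̃⁽⁰⁾ ≡ 1, X̃⁽ⁿ⁾(x) = n ∫₀ˣ X̃⁽ⁿ⁻¹⁾(s) (f(s)²)^((−1)^(n−1)) ds. -/
def formalXt (f : ℝ → ℂ) : ℕ → ℝ → ℂ
  | 0 => fun _ => 1
  | n + 1 => fun x =>
      (n + 1 : ℂ) * ∫ s in (0:ℝ)..x, formalXt f n s * ((f s) ^ 2) ^ ((-1 : ℤ) ^ n)

/-- The formal powers φₖ: φₖ = f·X⁽ᵏ⁾ for odd k, φₖ = f·X̃⁽ᵏ⁾ for even k. -/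
def formalPower (f : ℝ → ℂ) (k : ℕ) (x : ℝ) : ℂ :=
  if Odd k then f x * formalX f k x else f x * formalXt f k x

section Primitives

variable {E : Type*} [NormedAddCommGroup E] [NormedSpace ℝ E]

theorem exists_boundedContinuous_eqOn_Icc {F : Type*} [PseudoMetricSpace F] {a b : ℝ}
    (hab : a ≤ b) {g : ℝ → F} (hg : ContinuousOn g (Set.Icc a b)) :
    ∃ G : BoundedContinuousFunction ℝ F, EqOn G g (Set.Icc a b) :=
  ⟨(BoundedContinuousFunction.mkOfCompact ⟨_, hg.domRestrict⟩).compContinuous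
    ⟨Set.projIcc a b hab, continuous_projIcc⟩,
    fun _ hx => congrArg (g ∘ Subtype.val) (Set.projIcc_of_mem hab hx)⟩

theorem hasDerivWithinAt_integral_Icc [CompleteSpace E] {a b c x : ℝ} {g : ℝ → E}
    (hg : ContinuousOn g (Set.Icc a b)) (hc : c ∈ Set.Icc a b) (hx : x ∈ Set.Icc a b) :
    HasDerivWithinAt (fun y => ∫ s in c..y, g s) (g x) (Set.Icc a b) x :=
  have : Fact (x ∈ Set.Icc a b) := ⟨hx⟩
  intervalIntegral.integral_hasDerivWithinAt_right
    (hg.mono (Set.uIcc_subset_Icc hc hx)).intervalIntegrable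
    (hg.stronglyMeasurableAtFilter_nhdsWithin measurableSet_Icc x) (hg x hx)

theorem hasDerivAt_integral_of_continuous_deriv {F F' : ℝ → ℝ → E} (hF : Continuous ↿F)
    (hF' : Continuous ↿F') (hd : ∀ x s, HasDerivAt (F · s) (F' x s) x) (a b x : ℝ) :
    HasDerivAt (fun y => ∫ s in a..b, F y s) (∫ s in a..b, F' x s) x := by
  obtain ⟨C, hC⟩ := ((isCompact_closedBall x 1).prod
    (isCompact_uIcc (a := a) (b := b))).exists_bound_of_continuousOn hF'.continuousOn
  exact (intervalIntegral.hasDerivAt_integral_of_dominated_loc_of_deriv_le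
    (bound := fun _ => C) (Metric.closedBall_mem_nhds x one_pos)
    (Eventually.of_forall fun y => (hF.uncurry_left y).aestronglyMeasurable)
    ((hF.uncurry_left x).intervalIntegrable _ _) (hF'.uncurry_left x).aestronglyMeasurable
    (Eventually.of_forall fun t ht y hy => hC (y, t) ⟨hy, uIoc_subset_uIcc ht⟩)
    intervalIntegrable_const (Eventually.of_forall fun t _ y _ => hd y t)).2

theorem hasDerivAt_integral_variable_right [CompleteSpace E] {F F' : ℝ → ℝ → E}
    (hF : Continuous ↿F) (hF' : Continuous ↿F') (hd : ∀ x s, HasDerivAt (F · s) (F' x s) x)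
    (a x : ℝ) :
    HasDerivAt (fun y => ∫ s in a..y, F y s) (F x x + ∫ s in a..x, F' x s) x := by
  let primitive : ℝ → ℝ → E := fun y z => ∫ s in a..z, F y s
  have hy : ∀ p : ℝ × ℝ, HasDerivAt (primitive · p.2) (∫ s in a..p.2, F' p.1 s) p.1 :=
    fun p => hasDerivAt_integral_of_continuous_deriv hF hF' hd a p.2 p.1
  have hz : ∀ p : ℝ × ℝ, HasDerivAt (primitive p.1) (F p.1 p.2) p.2 := fun p =>
    ((hF.uncurry_left p.1).integral_hasStrictDerivAt a p.2).hasDerivAt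
  have hc : Continuous fun p : ℝ × ℝ => ∫ s in a..p.2, F' p.1 s :=
    intervalIntegral.continuous_parametric_primitive_of_continuous hF'
  have hprimitive := hasStrictFDerivAt_uncurry_coprod (u := (x, x)) (f := primitive)
    (f₁ := fun y z => .toSpanSingleton ℝ (∫ s in a..z, F' y s))
    (f₂ := fun y z => .toSpanSingleton ℝ (F y z))
    (Eventually.of_forall fun p => (hy p).hasFDerivAt)
    (Eventually.of_forall fun p => (hz p).hasFDerivAt)
    ((ContinuousLinearMap.toSpanSingletonCLE (𝕜 := ℝ) (E := E)).continuous.comp hc).continuousAt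
    ((ContinuousLinearMap.toSpanSingletonCLE (𝕜 := ℝ) (E := E)).continuous.comp hF).continuousAt
  exact (hprimitive.hasFDerivAt.comp_hasDerivAt (f := fun y => (y, y)) x
    ((hasDerivAt_id x).prodMk (hasDerivAt_id x))).congr_deriv
      (by simp [Function.HasUncurry.uncurry, add_comm])

theorem norm_integral_le_cosh {l C : ℝ} (hl : 0 < l) {g : ℝ → E}
    (hg : ∀ t, ‖g t‖ ≤ C * Real.cosh (l * t)) (x : ℝ) :
    ‖∫ t in (0 : ℝ)..x, g t‖ ≤ C / l * Real.cosh (l * x) := by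
  have hC : 0 ≤ C := by simpa using (norm_nonneg _).trans (hg 0)
  have hcosh : ∫ t in (0 : ℝ)..x, C * Real.cosh (l * t) = C / l * Real.sinh (l * x) := by
    have hderiv : ∀ t : ℝ, HasDerivAt (fun t => C / l * Real.sinh (l * t))
        (C * Real.cosh (l * t)) t := fun t =>
      ((((hasDerivAt_id t).const_mul l).sinh).const_mul (C / l)).congr_deriv (by
        simp only [id]
        field_simp)
    rw [intervalIntegral.integral_eq_sub_of_hasDerivAt (fun t _ => hderiv t)
      (Continuous.intervalIntegrable (by fun_prop) _ _)]
    simp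
  calc ‖∫ t in (0 : ℝ)..x, g t‖
      ≤ |∫ t in (0 : ℝ)..x, C * Real.cosh (l * t)| :=
        intervalIntegral.norm_integral_le_abs_of_norm_le (Eventually.of_forall hg)
          (Continuous.intervalIntegrable (by fun_prop) _ _)
    _ = C / l * |Real.sinh (l * x)| := by rw [hcosh, abs_mul, abs_of_nonneg (by positivity)]
    _ ≤ C / l * Real.cosh (l * x) := by
        gcongr
        rw [Real.abs_sinh, ← Real.cosh_abs]
        exact (Real.sinh_lt_cosh _).le

end Primitives

section WeightedFixedPoint

variable {X E : Type*} [TopologicalSpace X] [NormedAddCommGroup E] [NormedSpace ℝ E]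
  [CompleteSpace E]

theorem exists_eq_add_of_weighted_contraction {w : C(X, ℝ)} (hw : ∀ x, 0 < w x)
    (V : C(X, E) →+ C(X, E)) {θ : ℝ} (hθ : θ < 1)
    (hV : ∀ (G : C(X, E)) (C : ℝ), (∀ x, ‖G x‖ ≤ C * w x) → ∀ x, ‖V G x‖ ≤ θ * C * w x)
    {h : C(X, E)} {C : ℝ} (hh : ∀ x, ‖h x‖ ≤ C * w x) :
    ∃ G : C(X, E), G = h + V G := by
  let W : BoundedContinuousFunction X E → C(X, E) := fun g => w • (g : C(X, E))
  have norm_W_le (g : BoundedContinuousFunction X E) (x : X) : ‖W g x‖ ≤ ‖g‖ * w x := by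
    rw [ContinuousMap.smul_apply', norm_smul, Real.norm_of_nonneg (hw x).le, mul_comm]
    exact mul_le_mul_of_nonneg_right (g.norm_coe_le_norm x) (hw x).le
  have norm_inv_smul_le {y : E} {c : ℝ} {x : X} (hy : ‖y‖ ≤ c * w x) :
      ‖(w x)⁻¹ • y‖ ≤ c := by
    rwa [norm_smul, Real.norm_of_nonneg (inv_pos.2 (hw x)).le, inv_mul_le_iff₀ (hw x), mul_comm]
  let Φ : BoundedContinuousFunction X E → BoundedContinuousFunction X E := fun g =>
    BoundedContinuousFunction.ofNormedAddCommGroup (fun x => (w x)⁻¹ • (h + V (W g)) x)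
      ((w.continuous.inv₀ fun x => (hw x).ne').smul (h + V (W g)).continuous) (C + θ * ‖g‖)
      fun x => norm_inv_smul_le <| (norm_add_le _ _).trans <|
        (add_le_add (hh x) (hV _ _ (norm_W_le g) x)).trans_eq (add_mul _ _ _).symm
  have dist_Φ_le (g₁ g₂ : BoundedContinuousFunction X E) :
      dist (Φ g₁) (Φ g₂) ≤ max θ 0 * dist g₁ g₂ := by
    refine (BoundedContinuousFunction.dist_le (by positivity)).2 fun x => ?_
    have hsub : Φ g₁ x - Φ g₂ x = (w x)⁻¹ • V (W (g₁ - g₂)) x := by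
      have hW : W (g₁ - g₂) = W g₁ - W g₂ := ContinuousMap.ext fun x => smul_sub _ _ _
      simp [Φ, hW, ← smul_sub]
    rw [dist_eq_norm, dist_eq_norm, hsub]
    exact (norm_inv_smul_le (hV _ _ (norm_W_le _) x)).trans
      (mul_le_mul_of_nonneg_right (le_max_left _ _) (norm_nonneg _))
  have hΦ : ContractingWith θ.toNNReal Φ :=
    ⟨by simpa using hθ, LipschitzWith.of_dist_le_mul dist_Φ_le⟩
  obtain ⟨g, hg, -⟩ := hΦ.exists_fixedPoint 0 (edist_ne_top _ _)
  refine ⟨W g, ContinuousMap.ext fun x => ?_⟩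
  calc w x • g x = w x • Φ g x := by rw [hg]
    _ = (h + V (W g)) x := smul_inv_smul₀ (hw x).ne' _

end WeightedFixedPoint

section Goursat

/-- The weight `cosh (l x) cosh (l y)`: primitives taken from `0` gain a factor `l⁻¹` against it in
each variable, which makes the Goursat integral operator a contraction on the whole plane. -/
def coshWeight (l : ℝ) : C(ℝ × ℝ, ℝ) :=
  ⟨fun p => Real.cosh (l * p.1) * Real.cosh (l * p.2), by fun_prop⟩

theorem coshWeight_pos (l : ℝ) (p : ℝ × ℝ) : 0 < coshWeight l p :=
  mul_pos (Real.cosh_pos _) (Real.cosh_pos _)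

variable {E : Type*} [NormedAddCommGroup E] [NormedSpace ℝ E]

theorem continuous_integral_fst {F : ℝ × ℝ → E} (hF : Continuous F) :
    Continuous fun p : ℝ × ℝ => ∫ x in (0 : ℝ)..p.1, F (x, p.2) :=
  intervalIntegral.continuous_parametric_intervalIntegral_of_continuous
    (f := fun (p : ℝ × ℝ) x => F (x, p.2)) (by fun_prop) continuous_fst

/-- The double primitive `(ξ, η) ↦ ∫₀^η ∫₀^ξ F(x, y) dx dy`, the inverse of `∂η ∂ξ` with zero data
on the axes. -/
def doublePrimitive : C(ℝ × ℝ, E) →+ C(ℝ × ℝ, E) :=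
  AddMonoidHom.mk'
    (fun F => ⟨fun p => ∫ y in (0 : ℝ)..p.2, ∫ x in (0 : ℝ)..p.1, F (x, y),
      intervalIntegral.continuous_parametric_intervalIntegral_of_continuous
        (f := fun (p : ℝ × ℝ) y => ∫ x in (0 : ℝ)..p.1, F (x, y))
        ((continuous_integral_fst F.continuous).comp
          (by fun_prop : Continuous fun p : (ℝ × ℝ) × ℝ => (p.1.1, p.2))) continuous_snd⟩)
    fun F G => by
      ext p
      have inner_add (y : ℝ) : ∫ x in (0 : ℝ)..p.1, (F + G) (x, y) =
          (∫ x in (0 : ℝ)..p.1, F (x, y)) + ∫ x in (0 : ℝ)..p.1, G (x, y) :=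
        intervalIntegral.integral_add (Continuous.intervalIntegrable (by fun_prop) _ _)
          (Continuous.intervalIntegrable (by fun_prop) _ _)
      have hinner (F : C(ℝ × ℝ, E)) : Continuous fun y => ∫ x in (0 : ℝ)..p.1, F (x, y) :=
        (continuous_integral_fst F.continuous).comp (by fun_prop : Continuous fun y : ℝ => (p.1, y))
      exact (intervalIntegral.integral_congr fun y _ => inner_add y).trans
        (intervalIntegral.integral_add ((hinner F).intervalIntegrable _ _)
          ((hinner G).intervalIntegrable _ _))

theorem norm_doublePrimitive_le {l C : ℝ} (hl : 0 < l) {F : C(ℝ × ℝ, E)}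
    (hF : ∀ p, ‖F p‖ ≤ C * coshWeight l p) (p : ℝ × ℝ) :
    ‖doublePrimitive F p‖ ≤ C / l ^ 2 * coshWeight l p := by
  have inner_le (y : ℝ) : ‖∫ x in (0 : ℝ)..p.1, F (x, y)‖ ≤
      C / l * Real.cosh (l * p.1) * Real.cosh (l * y) :=
    (norm_integral_le_cosh hl (C := C * Real.cosh (l * y)) (fun x => (hF (x, y)).trans_eq
      (by rw [coshWeight, ContinuousMap.coe_mk]; ring)) p.1).trans_eq (by ring)
  exact (norm_integral_le_cosh hl inner_le p.2).trans_eq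
    (by rw [coshWeight, ContinuousMap.coe_mk]; ring)

theorem exists_eq_add_doublePrimitive_mul {a : C(ℝ × ℝ, ℂ)} {M l : ℝ} (ha : ∀ p, ‖a p‖ ≤ M)
    (hl : 0 < l) (hM : M < l ^ 2) {h : C(ℝ × ℝ, ℂ)} {C : ℝ}
    (hh : ∀ p, ‖h p‖ ≤ C * coshWeight l p) :
    ∃ G : C(ℝ × ℝ, ℂ), G = h + doublePrimitive (a * G) :=
  exists_eq_add_of_weighted_contraction (coshWeight_pos l)
    (doublePrimitive.comp (AddMonoidHom.mulLeft a)) ((div_lt_one (by positivity)).2 hM)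
    (fun G C hG p => (norm_doublePrimitive_le hl (C := M * C) (fun p => (norm_mul_le _ _).trans
      ((mul_le_mul (ha p) (hG p) (norm_nonneg _) ((norm_nonneg _).trans (ha p))).trans_eq
        (mul_assoc _ _ _).symm)) p).trans_eq (by ring)) hh

/-- `H` solves the Goursat problem `∂η ∂ξ H = q (ξ + η) H`, `H (ξ, 0) = ½ ∫₀^ξ q`, `H (0, η) = 0`;
`B` is its derivative `∂η H`, and the condition on `ξ = 0` is recorded as `B (0, η) = 0`. -/
structure IsGoursatSolution (q : ℝ → ℂ) (H B : ℝ → ℝ → ℂ) : Prop where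
  continuous : Continuous ↿H
  continuous_deriv : Continuous ↿B
  hasDerivAt_right : ∀ ξ η, HasDerivAt (H ξ) (B ξ η) η
  hasDerivAt_deriv_left : ∀ ξ η, HasDerivAt (B · η) (q (ξ + η) * H ξ η) ξ
  deriv_zero_left : ∀ η, B 0 η = 0
  apply_zero_right : ∀ ξ, H ξ 0 = 1 / 2 * ∫ s in (0 : ℝ)..ξ, q s

theorem exists_isGoursatSolution (q : BoundedContinuousFunction ℝ ℂ) :
    ∃ H B : ℝ → ℝ → ℂ, IsGoursatSolution q H B := by
  let l : ℝ := ‖q‖ + 1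
  have hl : 0 < l := by positivity
  let potential : C(ℝ × ℝ, ℂ) := ⟨fun p => q (p.1 + p.2), by fun_prop⟩
  let boundary : C(ℝ × ℝ, ℂ) := ⟨fun p => 1 / 2 * ∫ s in (0 : ℝ)..p.1, q s, continuous_const.mul
    ((intervalIntegral.continuous_primitive (fun _ _ => q.continuous.intervalIntegrable _ _) 0).comp
      continuous_fst)⟩
  have norm_boundary_le (p : ℝ × ℝ) : ‖boundary p‖ ≤ ‖q‖ / l * coshWeight l p := by
    have hint := norm_integral_le_cosh hl (fun t => (q.norm_coe_le_norm t).trans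
      (le_mul_of_one_le_right (norm_nonneg q) (Real.one_le_cosh (l * t)))) p.1
    calc ‖boundary p‖ ≤ 1 * (‖q‖ / l * Real.cosh (l * p.1)) :=
          (norm_mul_le _ _).trans (mul_le_mul (by norm_num) hint (norm_nonneg _) zero_le_one)
      _ ≤ ‖q‖ / l * Real.cosh (l * p.1) * Real.cosh (l * p.2) := by
          rw [one_mul]
          exact le_mul_of_one_le_right (by positivity) (Real.one_le_cosh _)
      _ = ‖q‖ / l * coshWeight l p := mul_assoc _ _ _
  obtain ⟨G, hG⟩ := exists_eq_add_doublePrimitive_mul (a := potential)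
    (fun p => q.norm_coe_le_norm _) hl (by nlinarith [norm_nonneg q]) norm_boundary_le
  let B (ξ η : ℝ) : ℂ := ∫ x in (0 : ℝ)..ξ, (potential * G) (x, η)
  have hB : Continuous ↿B := continuous_integral_fst (potential * G).continuous
  have hH (p : ℝ × ℝ) : G p = boundary p + ∫ y in (0 : ℝ)..p.2, B p.1 y := DFunLike.congr_fun hG p
  refine ⟨fun ξ η => G (ξ, η), B, G.continuous, hB, fun ξ η => ?_, fun ξ η => ?_,
    fun η => intervalIntegral.integral_same, fun ξ => ?_⟩
  · exact (((hB.uncurry_left ξ).integral_hasStrictDerivAt 0 η).hasDerivAt.const_add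
      (boundary (ξ, η))).congr_of_eventuallyEq (Eventually.of_forall fun z => hH (ξ, z))
  · exact (Continuous.integral_hasStrictDerivAt (f := fun x => (potential * G) (x, η))
      (by fun_prop) 0 ξ).hasDerivAt
  · simpa [boundary] using hH (ξ, 0)

end Goursat

section CharacteristicKernel

/-- The Volterra part `x ↦ ∫_{-x}^{x} K (x, t) u(t) dt` of the transmutation operator of a kernel
`K`. -/
def kernelIntegral (K : ℝ → ℝ → ℂ) (u : ℝ → ℂ) (x : ℝ) : ℂ :=
  ∫ t in (-x)..x, K x t * u t

/-- The kernel whose expression in the characteristic coordinates `ξ = (x + t) / 2`,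
`η = (x - t) / 2` is `G`. -/
def characteristicKernel (G : ℝ → ℝ → ℂ) (x t : ℝ) : ℂ :=
  G ((x + t) / 2) ((x - t) / 2)

variable {G G' : ℝ → ℝ → ℂ} {u u' : ℝ → ℂ}

theorem continuous_characteristicKernel (hG : Continuous ↿G) :
    Continuous ↿(characteristicKernel G) :=
  hG.comp (by fun_prop : Continuous fun p : ℝ × ℝ => ((p.1 + p.2) / 2, (p.1 - p.2) / 2))

theorem kernelIntegral_characteristicKernel (G : ℝ → ℝ → ℂ) (u : ℝ → ℂ) (x : ℝ) :
    kernelIntegral (characteristicKernel G) u x =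
      ∫ s in (0 : ℝ)..x, 2 * (G s (x - s) * u (2 * s - x)) := by
  have hsubst := intervalIntegral.smul_integral_comp_mul_sub (a := 0) (b := x)
    (fun t => characteristicKernel G x t * u t) 2 x
  rw [show (2 : ℝ) * 0 - x = -x by ring, show 2 * x - x = x by ring] at hsubst
  rw [kernelIntegral, ← hsubst, ← intervalIntegral.integral_smul]
  refine intervalIntegral.integral_congr fun s _ => ?_
  simp only [characteristicKernel, Complex.real_smul, Complex.ofReal_ofNat]
  rw [show (x + (2 * s - x)) / 2 = s by ring, show (x - (2 * s - x)) / 2 = x - s by ring]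

theorem kernelIntegral_characteristicKernel_swap (G : ℝ → ℝ → ℂ) (u : ℝ → ℂ) (x : ℝ) :
    kernelIntegral (characteristicKernel fun ξ η => G η ξ) (fun t => u (-t)) x =
      kernelIntegral (characteristicKernel G) u x := by
  simpa [kernelIntegral, characteristicKernel, ← sub_eq_add_neg] using
    intervalIntegral.integral_comp_neg (a := -x) (b := x)
      fun t => characteristicKernel G x t * u t

theorem continuous_kernelIntegral_characteristicKernel (hG : Continuous ↿G) (hu : Continuous u) :
    Continuous (kernelIntegral (characteristicKernel G) u) := by
  rw [funext (kernelIntegral_characteristicKernel G u)]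
  exact intervalIntegral.continuous_parametric_intervalIntegral_of_continuous
    (f := fun (x : ℝ) s => 2 * (G s (x - s) * u (2 * s - x))) (by fun_prop) continuous_id

theorem hasDerivAt_kernelIntegral_of_right (hG : Continuous ↿G) (hG' : Continuous ↿G')
    (hGG' : ∀ ξ η, HasDerivAt (G ξ) (G' ξ η) η) (hu : ∀ x, HasDerivAt u (u' x) x)
    (hu' : Continuous u') (x : ℝ) :
    HasDerivAt (kernelIntegral (characteristicKernel G) u)
      (2 * G x 0 * u x + kernelIntegral (characteristicKernel G') u x
        - kernelIntegral (characteristicKernel G) u' x) x := by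
  have huc : Continuous u := continuous_iff_continuousAt.2 fun x => (hu x).continuousAt
  let F' (x s : ℝ) : ℂ := 2 * (G' s (x - s) * u (2 * s - x)) - 2 * (G s (x - s) * u' (2 * s - x))
  have integrand_deriv (x s : ℝ) :
      HasDerivAt (fun y => 2 * (G s (y - s) * u (2 * s - y))) (F' x s) x :=
    ((((hGG' s (x - s)).comp_sub_const x s).mul
      ((hu (2 * s - x)).comp_const_sub (2 * s) x)).const_mul 2).congr_deriv
        (by simp only [F']; ring)
  have integral_F' : ∫ s in (0 : ℝ)..x, F' x s = kernelIntegral (characteristicKernel G') u x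
      - kernelIntegral (characteristicKernel G) u' x := by
    rw [kernelIntegral_characteristicKernel, kernelIntegral_characteristicKernel]
    exact intervalIntegral.integral_sub
      (Continuous.intervalIntegrable (by fun_prop) _ _)
      (Continuous.intervalIntegrable (by fun_prop) _ _)
  rw [funext (kernelIntegral_characteristicKernel G u)]
  refine (hasDerivAt_integral_variable_right (by fun_prop) (by fun_prop) integrand_deriv
    0 x).congr_deriv ?_
  rw [integral_F', sub_self, show 2 * x - x = x by ring]
  ring

theorem hasDerivAt_kernelIntegral_of_left (hG : Continuous ↿G) (hG' : Continuous ↿G')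
    (hGG' : ∀ ξ η, HasDerivAt (G · η) (G' ξ η) ξ) (hu : ∀ x, HasDerivAt u (u' x) x)
    (hu' : Continuous u') (x : ℝ) :
    HasDerivAt (kernelIntegral (characteristicKernel G) u)
      (2 * G 0 x * u (-x) + kernelIntegral (characteristicKernel G') u x
        + kernelIntegral (characteristicKernel G) u' x) x := by
  have hneg (x : ℝ) : HasDerivAt (fun t => u (-t)) (-u' (-x)) x :=
    ((hu (-x)).scomp x (hasDerivAt_neg x)).congr_deriv (neg_one_smul _ _)
  have hswap := hasDerivAt_kernelIntegral_of_right
    (G := fun ξ η => G η ξ) (G' := fun ξ η => G' η ξ) (hG.comp continuous_swap)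
    (hG'.comp continuous_swap) (fun ξ η => hGG' η ξ) hneg (by fun_prop) x
  have hneg' : kernelIntegral (characteristicKernel fun ξ η => G η ξ) (fun t => -u' (-t)) x =
      -kernelIntegral (characteristicKernel G) u' x := by
    rw [kernelIntegral_characteristicKernel_swap G (fun t => -u' t)]
    simp [kernelIntegral]
  rwa [funext (kernelIntegral_characteristicKernel_swap G u),
    kernelIntegral_characteristicKernel_swap G' u, hneg', sub_neg_eq_add] at hswap

end CharacteristicKernel

section Transmutation

variable {q u u' u'' : ℝ → ℂ} {H B : ℝ → ℝ → ℂ}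

/-- The transmutation operator `T u (x) = u(x) + ∫_{-x}^{x} K (x, t) u(t) dt` whose kernel `K` is
`H` in characteristic coordinates. -/
def transmutation (H : ℝ → ℝ → ℂ) (u : ℝ → ℂ) (x : ℝ) : ℂ :=
  u x + kernelIntegral (characteristicKernel H) u x

@[simp]
theorem transmutation_zero (H : ℝ → ℝ → ℂ) (u : ℝ → ℂ) : transmutation H u 0 = u 0 := by
  simp [transmutation, kernelIntegral]

theorem transmutation_const_mul (H : ℝ → ℝ → ℂ) (c : ℂ) (u : ℝ → ℂ) (x : ℝ) :
    transmutation H (fun t => c * u t) x = c * transmutation H u x := by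
  simp only [transmutation, kernelIntegral, mul_add, mul_left_comm _ c,
    intervalIntegral.integral_const_mul]

theorem continuous_transmutation (hH : Continuous ↿H) (hu : Continuous u) :
    Continuous (transmutation H u) :=
  hu.add (continuous_kernelIntegral_characteristicKernel hH hu)

/-- The derivative of `transmutation H u`. -/
def transmutationDeriv (H B : ℝ → ℝ → ℂ) (u u' : ℝ → ℂ) (x : ℝ) : ℂ :=
  u' x + (2 * H x 0 * u x + kernelIntegral (characteristicKernel B) u x
    - kernelIntegral (characteristicKernel H) u' x)

namespace IsGoursatSolution

theorem transmutationDeriv_zero (h : IsGoursatSolution q H B) :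
    transmutationDeriv H B u u' 0 = u' 0 := by
  simp [transmutationDeriv, kernelIntegral, h.apply_zero_right]

theorem hasDerivAt_transmutation (h : IsGoursatSolution q H B)
    (hu : ∀ x, HasDerivAt u (u' x) x) (hu' : Continuous u') (x : ℝ) :
    HasDerivAt (transmutation H u) (transmutationDeriv H B u u' x) x :=
  (hu x).add (hasDerivAt_kernelIntegral_of_right h.continuous h.continuous_deriv
    h.hasDerivAt_right hu hu' x)

theorem hasDerivAt_transmutationDeriv (h : IsGoursatSolution q H B) (hq : Continuous q)
    (hu : ∀ x, HasDerivAt u (u' x) x) (hu' : ∀ x, HasDerivAt u' (u'' x) x)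
    (hu'' : Continuous u'') (x : ℝ) :
    HasDerivAt (transmutationDeriv H B u u')
      (q x * transmutation H u x + transmutation H u'' x) x := by
  have huc' : Continuous u' := continuous_iff_continuousAt.2 fun x => (hu' x).continuousAt
  have boundary_deriv : HasDerivAt (fun x => 2 * H x 0) (q x) x := by
    simp only [h.apply_zero_right]
    exact (((hq.integral_hasStrictDerivAt 0 x).hasDerivAt.const_mul (1 / 2)).const_mul
      2).congr_deriv (by ring)
  have hB := hasDerivAt_kernelIntegral_of_left h.continuous_deriv
    (G' := fun ξ η => q (ξ + η) * H ξ η) (by have := h.continuous; fun_prop)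
    h.hasDerivAt_deriv_left hu huc' x
  have hH := hasDerivAt_kernelIntegral_of_right h.continuous h.continuous_deriv h.hasDerivAt_right
    hu' hu'' x
  have potential_factor : kernelIntegral (characteristicKernel fun ξ η => q (ξ + η) * H ξ η) u x =
      q x * kernelIntegral (characteristicKernel H) u x := by
    rw [kernelIntegral, kernelIntegral, ← intervalIntegral.integral_const_mul]
    refine intervalIntegral.integral_congr fun t _ => ?_
    simp only [characteristicKernel]
    rw [show (x + t) / 2 + (x - t) / 2 = x by ring, mul_assoc]
  refine ((hu' x).add (((boundary_deriv.mul (hu x)).add hB).sub hH)).congr_deriv ?_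
  rw [potential_factor, h.deriv_zero_left]
  simp only [transmutation]
  ring

end IsGoursatSolution

end Transmutation

section Extension

variable {E : Type*} [NormedAddCommGroup E] [NormedSpace ℝ E] [CompleteSpace E]
  {a b : ℝ} {u u' u'' w : ℝ → E}

theorem exists_primitive_eqOn_Icc (hw : Continuous w)
    (hu : ∀ x ∈ Set.Icc a b, HasDerivAt u (w x) x) :
    ∃ U : ℝ → E, (∀ x, HasDerivAt U (w x) x) ∧ EqOn U u (Set.Icc a b) := by
  refine ⟨fun x => u a + ∫ s in a..x, w s,
    fun x => (hw.integral_hasStrictDerivAt a x).hasDerivAt.const_add _, fun x hx => ?_⟩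
  have hsub : Set.uIcc a x ⊆ Set.Icc a b :=
    Set.uIcc_subset_Icc ⟨le_rfl, hx.1.trans hx.2⟩ hx
  simp only [intervalIntegral.integral_eq_sub_of_hasDerivAt (fun y hy => hu y (hsub hy))
    (hw.intervalIntegrable a x), add_sub_cancel]

theorem exists_hasDerivAt_twice_eqOn_Icc (hab : a ≤ b)
    (hu : ∀ x ∈ Set.Icc a b, HasDerivAt u (u' x) x)
    (hu' : ∀ x ∈ Set.Icc a b, HasDerivAt u' (u'' x) x) (hu'' : ContinuousOn u'' (Set.Icc a b)) :
    ∃ w w' w'' : ℝ → E, (∀ x, HasDerivAt w (w' x) x) ∧ (∀ x, HasDerivAt w' (w'' x) x) ∧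
      Continuous w'' ∧ EqOn w u (Set.Icc a b) ∧ EqOn w' u' (Set.Icc a b) ∧
      EqOn w'' u'' (Set.Icc a b) := by
  obtain ⟨w'', hw''⟩ := exists_boundedContinuous_eqOn_Icc hab hu''
  obtain ⟨w', hw', hwu'⟩ := exists_primitive_eqOn_Icc w''.continuous
    fun x hx => (hu' x hx).congr_deriv (hw'' hx).symm
  obtain ⟨w, hw, hwu⟩ := exists_primitive_eqOn_Icc
    (continuous_iff_continuousAt.2 fun x => (hw' x).continuousAt)
    fun x hx => (hu x hx).congr_deriv (hwu' hx).symm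
  exact ⟨w, w', w'', hw, hw', w''.continuous, hwu, hwu', hw''⟩

end Extension

section Reflection

/-- The point of `[a, b]` closest to `s`, for `a ≤ b`. -/
def clamp (a b s : ℝ) : ℝ :=
  max a (min b s)

/-- The reflection of `s` in the endpoint of `[a, b]` beyond which it lies; `s` itself if it lies in
`[a, b]`. -/
def mirror (a b s : ℝ) : ℝ :=
  2 * clamp a b s - s

theorem clamp_of_mem_Icc {a b s : ℝ} (hs : s ∈ Set.Icc a b) : clamp a b s = s := by
  rw [clamp, min_eq_right hs.2, max_eq_right hs.1]

theorem mirror_of_mem_Icc {a b s : ℝ} (hs : s ∈ Set.Icc a b) : mirror a b s = s := by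
  rw [mirror, clamp_of_mem_Icc hs]
  ring

theorem abs_clamp_sub_le {a b x : ℝ} (hx : x ∈ Set.Icc a b) (s : ℝ) :
    |clamp a b s - x| ≤ |s - x| := by
  obtain ⟨ha, hb⟩ := hx
  grind [clamp]

theorem abs_mirror_sub_le {a b x : ℝ} (hx : x ∈ Set.Icc a b) (s : ℝ) :
    |mirror a b s - x| ≤ |s - x| := by
  obtain ⟨ha, hb⟩ := hx
  grind [mirror, clamp]

theorem clamp_mem_uIcc {b s : ℝ} (hb : 0 ≤ b) : clamp (-b) b s ∈ Set.uIcc 0 s := by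
  rw [Set.mem_uIcc]
  grind [clamp]

theorem mirror_mem_uIcc {b s : ℝ} (hs : |s| ≤ 2 * b) : mirror (-b) b s ∈ Set.uIcc 0 s := by
  rw [Set.mem_uIcc]
  grind [mirror, clamp]

theorem clamp_mem_Icc {b : ℝ} (hb : 0 ≤ b) (s : ℝ) : clamp (-b) b s ∈ Set.Icc (-b) b := by
  grind [clamp]

theorem mirror_mem_Icc {b s : ℝ} (hs : |s| ≤ 2 * b) : mirror (-b) b s ∈ Set.Icc (-b) b := by
  grind [mirror, clamp]

variable {E : Type*} [NormedAddCommGroup E] [NormedSpace ℝ E]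

theorem isLittleO_comp_of_hasDerivAt {F : ℝ → E} {d : E} {φ : ℝ → ℝ} {x : ℝ} (hF : HasDerivAt F d x)
    (hφ : ∀ s, |φ s - x| ≤ |s - x|) :
    (fun s => F (φ s) - F x - (φ s - x) • d) =o[𝓝 x] fun s => s - x := by
  have hlim : Tendsto φ (𝓝 x) (𝓝 x) := tendsto_iff_dist_tendsto_zero.2 <|
    squeeze_zero (fun _ => dist_nonneg) hφ (tendsto_iff_dist_tendsto_zero.1 tendsto_id)
  exact (hF.isLittleO.comp_tendsto hlim).trans_isBigO
    (Asymptotics.isBigO_of_le _ fun s => hφ s)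

/-- The extension `s ↦ 2 F(clamp s) - F(mirror s)` of `F` from `[a, b]` by odd reflection of its
graph in the endpoints; unlike a constant extension it stays differentiable there. -/
def reflectExtend (a b : ℝ) (F : ℝ → E) (s : ℝ) : E :=
  (2 : ℝ) • F (clamp a b s) - F (mirror a b s)

theorem reflectExtend_of_mem_Icc {a b s : ℝ} (F : ℝ → E) (hs : s ∈ Set.Icc a b) :
    reflectExtend a b F s = F s := by
  rw [reflectExtend, clamp_of_mem_Icc hs, mirror_of_mem_Icc hs, two_smul, add_sub_cancel_right]

theorem hasDerivAt_reflectExtend {a b x : ℝ} {F : ℝ → E} {d : E} (hx : x ∈ Set.Icc a b)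
    (hF : HasDerivAt F d x) : HasDerivAt (reflectExtend a b F) d x := by
  rw [hasDerivAt_iff_isLittleO, reflectExtend_of_mem_Icc F hx]
  refine (((isLittleO_comp_of_hasDerivAt hF (abs_clamp_sub_le hx)).const_smul_left (2 : ℝ)).sub
    (isLittleO_comp_of_hasDerivAt hF (abs_mirror_sub_le hx))).congr_left fun s => ?_
  simp only [reflectExtend, mirror, Pi.smul_apply]
  module

theorem integral_indicator_Icc {a b c d : ℝ} (hac : a ≤ c) (hcd : c ≤ d) (hdb : d ≤ b)
    (g : ℝ → E) : ∫ t in a..b, (Set.Icc c d).indicator g t = ∫ t in c..d, g t := by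
  rw [intervalIntegral.integral_of_le (hac.trans (hcd.trans hdb)),
    intervalIntegral.integral_of_le hcd, ← integral_Icc_eq_integral_Ioc,
    ← integral_Icc_eq_integral_Ioc, setIntegral_indicator measurableSet_Icc,
    Set.inter_eq_self_of_subset_right (Set.Icc_subset_Icc hac hdb)]

theorem integral_indicator_uIcc_neg {r s : ℝ} (hr : r ∈ Set.uIcc 0 s) (g : ℝ → E) :
    ∫ t in (-s)..s, (Set.uIcc (-r) r).indicator g t = ∫ t in (-r)..r, g t := by
  rcases Set.mem_uIcc.1 hr with ⟨h0, hs⟩ | ⟨hs, h0⟩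
  · rw [Set.uIcc_of_le (by linarith), integral_indicator_Icc (by linarith) (by linarith) hs]
  · rw [Set.uIcc_of_ge (by linarith), intervalIntegral.integral_symm,
      intervalIntegral.integral_symm r,
      integral_indicator_Icc hs (by linarith) (by linarith)]

/-- The kernel obtained from `K` by reflecting in the endpoints of `[-b, b]` the Volterra operators
`K (s, ·)` on `[-s, s]`; the indicators cut the operators at `clamp s` and `mirror s` out of the
integral over `[-s, s]`. -/
def reflectedKernel (b : ℝ) (K : ℝ → ℝ → ℂ) (s t : ℝ) : ℂ :=
  reflectExtend (-b) b (fun r => (Set.uIcc (-r) r).indicator (K r) t) s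

theorem reflectedKernel_of_abs_le {b s t : ℝ} (K : ℝ → ℝ → ℂ) (hs : |s| ≤ b) (ht : |t| ≤ |s|) :
    reflectedKernel b K s t = K s t := by
  have hmem : t ∈ Set.uIcc (-s) s := by
    rw [Set.mem_uIcc]
    grind
  rw [reflectedKernel, reflectExtend_of_mem_Icc _ (abs_le.1 hs), Set.indicator_of_mem hmem]

theorem kernelIntegral_reflectedKernel {b s : ℝ} {K : ℝ → ℝ → ℂ} {u w : ℝ → ℂ}
    (hK : ∀ x, Continuous (K x)) (hw : Continuous w) (hwu : EqOn w u (Set.Icc (-b) b))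
    (hs : |s| ≤ 2 * b) :
    kernelIntegral (reflectedKernel b K) u s = reflectExtend (-b) b (kernelIntegral K w) s := by
  have hb : 0 ≤ b := by linarith [abs_nonneg s]
  let cut (r t : ℝ) : ℂ := (Set.uIcc (-r) r).indicator (fun t => K r t * w t) t
  have cut_eq {r : ℝ} (hr : r ∈ Set.Icc (-b) b) (t : ℝ) :
      (Set.uIcc (-r) r).indicator (K r) t * u t = cut r t := by
    by_cases ht : t ∈ Set.uIcc (-r) r
    · have ht' := Set.uIcc_subset_Icc ⟨neg_le_neg hr.2, neg_le.1 hr.1⟩ hr ht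
      simp only [cut, Set.indicator_of_mem ht, hwu ht']
    · simp only [cut, Set.indicator_of_notMem ht, zero_mul]
  have integral_cut {r : ℝ} (hr : r ∈ Set.uIcc 0 s) :
      ∫ t in (-s)..s, cut r t = kernelIntegral K w r :=
    integral_indicator_uIcc_neg hr _
  have integrable_cut (r : ℝ) : IntervalIntegrable (cut r) volume (-s) s := by
    have hint := ((hK r).mul hw).intervalIntegrable (μ := volume) (-s) s
    exact ⟨hint.1.indicator measurableSet_uIcc, hint.2.indicator measurableSet_uIcc⟩
  calc kernelIntegral (reflectedKernel b K) u s
      = ∫ t in (-s)..s, ((2 : ℝ) • cut (clamp (-b) b s) t - cut (mirror (-b) b s) t) := by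
        refine intervalIntegral.integral_congr fun t _ => ?_
        simp only [← cut_eq (clamp_mem_Icc hb s), ← cut_eq (mirror_mem_Icc hs), reflectedKernel,
          reflectExtend, sub_mul, smul_mul_assoc]
    _ = reflectExtend (-b) b (kernelIntegral K w) s := by
        refine (intervalIntegral.integral_sub ((integrable_cut _).smul (2 : ℝ))
          (integrable_cut _)).trans ?_
        simp only [Pi.smul_apply, intervalIntegral.integral_smul, integral_cut (clamp_mem_uIcc hb),
          integral_cut (mirror_mem_uIcc hs), reflectExtend]

end Reflection

section SecondOrderODE

theorem eqOn_Icc_of_second_order_ode {A : Type*} [NormedRing A] [NormedAlgebra ℝ A]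
    {q g y y' z z' : ℝ → A} {a b x₀ : ℝ} (hq : ContinuousOn q (Set.Icc a b))
    (hx₀ : x₀ ∈ Set.Ioo a b)
    (hy : ∀ x ∈ Set.Icc a b, HasDerivWithinAt y (y' x) (Set.Icc a b) x)
    (hy' : ∀ x ∈ Set.Icc a b, HasDerivWithinAt y' (q x * y x + g x) (Set.Icc a b) x)
    (hz : ∀ x ∈ Set.Icc a b, HasDerivWithinAt z (z' x) (Set.Icc a b) x)
    (hz' : ∀ x ∈ Set.Icc a b, HasDerivWithinAt z' (q x * z x + g x) (Set.Icc a b) x)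
    (h : y x₀ = z x₀) (h' : y' x₀ = z' x₀) : EqOn y z (Set.Icc a b) := by
  obtain ⟨M, hM⟩ := isCompact_Icc.exists_bound_of_continuousOn hq
  let v (t : ℝ) (p : A × A) : A × A := (p.2, q t * p.1 + g t)
  have lipschitz : ∀ t ∈ Set.Ioo a b, LipschitzOnWith (max 1 M).toNNReal (v t) Set.univ := by
    refine fun t ht => LipschitzOnWith.of_dist_le_mul fun p _ p' _ => ?_
    rw [Real.coe_toNNReal _ (by positivity), Prod.dist_eq, dist_add_right]
    refine max_le ?_ ?_
    · calc dist p.2 p'.2 ≤ 1 * dist p p' := by rw [one_mul]; exact le_max_right _ _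
        _ ≤ max 1 M * dist p p' := by gcongr; exact le_max_left _ _
    · calc dist (q t * p.1) (q t * p'.1) = ‖q t * (p.1 - p'.1)‖ := by rw [dist_eq_norm, mul_sub]
        _ ≤ ‖q t‖ * dist p.1 p'.1 := (norm_mul_le _ _).trans_eq (by rw [dist_eq_norm])
        _ ≤ max 1 M * dist p p' := by
          gcongr
          · exact (hM t (Set.Ioo_subset_Icc_self ht)).trans (le_max_right _ _)
          · exact le_max_left _ _
  have solution {w w' : ℝ → A}
      (hw : ∀ x ∈ Set.Icc a b, HasDerivWithinAt w (w' x) (Set.Icc a b) x)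
      (hw' : ∀ x ∈ Set.Icc a b, HasDerivWithinAt w' (q x * w x + g x) (Set.Icc a b) x) (t : ℝ)
      (ht : t ∈ Set.Icc a b) :
      HasDerivWithinAt (fun t => (w t, w' t)) (v t (w t, w' t)) (Set.Icc a b) t :=
    (hw t ht).prodMk (hw' t ht)
  have eqOn := ODE_solution_unique_of_mem_Icc lipschitz hx₀
    (HasDerivWithinAt.continuousOn (solution hy hy'))
    (fun t ht => (solution hy hy' t (Set.Ioo_subset_Icc_self ht)).hasDerivAt
      (Icc_mem_nhds ht.1 ht.2)) (fun _ _ => Set.mem_univ _)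
    (HasDerivWithinAt.continuousOn (solution hz hz'))
    (fun t ht => (solution hz hz' t (Set.Ioo_subset_Icc_self ht)).hasDerivAt
      (Icc_mem_nhds ht.1 ht.2)) (fun _ _ => Set.mem_univ _) (Prod.ext h h')
  exact fun x hx => congrArg Prod.fst (eqOn hx)

end SecondOrderODE

section FormalPower

theorem formalX_inv (f : ℝ → ℂ) (n : ℕ) : formalX f⁻¹ n = formalXt f n := by
  induction n with
  | zero => rfl
  | succ n ih =>
    ext x
    simp only [formalX, formalXt, ih, Pi.inv_apply, inv_pow, inv_zpow', pow_succ (-1 : ℤ), mul_neg,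
      mul_one, neg_neg]

theorem formalPower_of_odd (f : ℝ → ℂ) {k : ℕ} (hk : Odd k) : formalPower f k = f * formalX f k :=
  funext fun _ => if_pos hk

theorem formalPower_of_even (f : ℝ → ℂ) {k : ℕ} (hk : Even k) :
    formalPower f k = f * formalX f⁻¹ k := by
  rw [formalX_inv]
  exact funext fun _ => if_neg (Nat.not_odd_iff_even.2 hk)

theorem formalPower_apply_zero (f : ℝ → ℂ) (k : ℕ) : formalPower f k 0 = f 0 * 0 ^ k := by
  cases k <;> simp [formalPower, formalX, formalXt]

variable {f : ℝ → ℂ} {a b x : ℝ}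

theorem continuousOn_formalX (hf : ContinuousOn f (Set.Icc a b))
    (hne : ∀ x ∈ Set.Icc a b, f x ≠ 0) (h0 : 0 ∈ Set.Icc a b) (n : ℕ) :
    ContinuousOn (formalX f n) (Set.Icc a b) := by
  induction n with
  | zero => exact continuousOn_const
  | succ n ih =>
    exact HasDerivWithinAt.continuousOn fun x hx => (hasDerivWithinAt_integral_Icc
      (ih.mul ((hf.pow 2).zpow₀ _ fun x hx => Or.inl (pow_ne_zero 2 (hne x hx)))) h0 hx).const_mul
        (n + 1 : ℂ)

theorem hasDerivWithinAt_formalX_succ (hf : ContinuousOn f (Set.Icc a b))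
    (hne : ∀ x ∈ Set.Icc a b, f x ≠ 0) (h0 : 0 ∈ Set.Icc a b) (n : ℕ) (hx : x ∈ Set.Icc a b) :
    HasDerivWithinAt (formalX f (n + 1))
      ((n + 1) * (formalX f n x * (f x ^ 2) ^ (-1 : ℤ) ^ (n + 1))) (Set.Icc a b) x :=
  (hasDerivWithinAt_integral_Icc ((continuousOn_formalX hf hne h0 n).mul
    ((hf.pow 2).zpow₀ _ fun x hx => Or.inl (pow_ne_zero 2 (hne x hx)))) h0 hx).const_mul _

theorem hasDerivWithinAt_formalPower (hf : ContinuousOn f (Set.Icc a b))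
    (hne : ∀ x ∈ Set.Icc a b, f x ≠ 0) (h0 : 0 ∈ Set.Icc a b) (k : ℕ) {d : ℂ}
    (hx : x ∈ Set.Icc a b) (hd : HasDerivWithinAt f d (Set.Icc a b) x) :
    HasDerivWithinAt (formalPower f k)
      (d / f x * formalPower f k x + k * formalPower f⁻¹ (k - 1) x) (Set.Icc a b) x := by
  have hfx := hne x hx
  rcases k with _ | n
  · rw [formalPower_of_even f Even.zero]
    exact (hd.mul_const (1 : ℂ)).congr_deriv (by simp [formalX, hfx])
  rcases Nat.even_or_odd n with hn | hn
  · rw [formalPower_of_odd f hn.add_one, Nat.add_sub_cancel, formalPower_of_even _ hn, inv_inv]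
    refine (hd.mul (hasDerivWithinAt_formalX_succ hf hne h0 n hx)).congr_deriv ?_
    simp only [hn.add_one.neg_one_pow, zpow_neg, zpow_ofNat, pow_one, Pi.mul_apply, Nat.cast_add,
      Nat.cast_one, Pi.inv_apply]
    field_simp
  · rw [formalPower_of_even f hn.add_one, Nat.add_sub_cancel, formalPower_of_odd _ hn]
    refine (hd.mul (hasDerivWithinAt_formalX_succ (hf.inv₀ hne)
      (fun x hx => inv_ne_zero (hne x hx)) h0 n hx)).congr_deriv ?_
    simp only [Pi.inv_apply, inv_pow, hn.add_one.neg_one_pow, zpow_ofNat, pow_one, Pi.mul_apply,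
      Nat.cast_add, Nat.cast_one]
    field_simp

theorem hasDerivWithinAt_formalPowerDeriv {q f' : ℝ → ℂ}
    (hf : ∀ x ∈ Set.Icc a b, HasDerivWithinAt f (f' x) (Set.Icc a b) x)
    (hf' : ∀ x ∈ Set.Icc a b, HasDerivWithinAt f' (q x * f x) (Set.Icc a b) x)
    (hne : ∀ x ∈ Set.Icc a b, f x ≠ 0) (h0 : 0 ∈ Set.Icc a b) (k : ℕ) (hx : x ∈ Set.Icc a b) :
    HasDerivWithinAt
      (fun x => f' x / f x * formalPower f k x + k * formalPower f⁻¹ (k - 1) x)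
      (q x * formalPower f k x + k * (k - 1 : ℕ) * formalPower f (k - 2) x) (Set.Icc a b) x := by
  have hfx := hne x hx
  have hfc : ContinuousOn f (Set.Icc a b) := HasDerivWithinAt.continuousOn hf
  have hφ := hasDerivWithinAt_formalPower hfc hne h0 k hx (hf x hx)
  have hψ := hasDerivWithinAt_formalPower (hfc.inv₀ hne) (fun x hx => inv_ne_zero (hne x hx)) h0
    (k - 1) hx ((hf x hx).inv hfx)
  refine ((((hf' x hx).div (hf x hx) hfx).mul hφ).add (hψ.const_mul (k : ℂ))).congr_deriv ?_
  rw [inv_inv, Nat.sub_sub]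
  simp only [Pi.inv_apply, Pi.div_apply]
  field_simp
  ring

end FormalPower

section Powers

variable {q f f' : ℝ → ℂ} {H B : ℝ → ℝ → ℂ} {a b : ℝ}

theorem IsGoursatSolution.eqOn_transmutation_pow_formalPower (h : IsGoursatSolution q H B)
    (hq : Continuous q) (h0 : 0 ∈ Set.Ioo a b)
    (hf : ∀ x ∈ Set.Icc a b, HasDerivWithinAt f (f' x) (Set.Icc a b) x)
    (hf' : ∀ x ∈ Set.Icc a b, HasDerivWithinAt f' (q x * f x) (Set.Icc a b) x)
    (hf0 : f 0 = 1) (hf'0 : f' 0 = 0) (hne : ∀ x ∈ Set.Icc a b, f x ≠ 0) (k : ℕ) :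
    EqOn (transmutation H fun t => (t : ℂ) ^ k) (formalPower f k) (Set.Icc a b) := by
  have h0' : (0 : ℝ) ∈ Set.Icc a b := Set.Ioo_subset_Icc_self h0
  have hfc : ContinuousOn f (Set.Icc a b) := HasDerivWithinAt.continuousOn hf
  have hasDerivAt_pow (k : ℕ) (x : ℝ) :
      HasDerivAt (fun t : ℝ => (t : ℂ) ^ k) (k * (x : ℂ) ^ (k - 1)) x := by
    simpa using (hasDerivAt_pow k (x : ℂ)).comp_ofReal
  have hasDerivAt_pow_deriv (k : ℕ) (x : ℝ) :
      HasDerivAt (fun t : ℝ => k * (t : ℂ) ^ (k - 1)) (k * (k - 1 : ℕ) * (x : ℂ) ^ (k - 2)) x :=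
    ((hasDerivAt_pow (k - 1) x).const_mul (k : ℂ)).congr_deriv (by rw [Nat.sub_sub, mul_assoc])
  induction k using Nat.strong_induction_on with
  | _ k ih =>
  have forcing : ∀ x ∈ Set.Icc a b, transmutation H (fun t => k * (k - 1 : ℕ) * (t : ℂ) ^ (k - 2)) x
      = k * (k - 1 : ℕ) * formalPower f (k - 2) x := by
    intro x hx
    rw [transmutation_const_mul]
    rcases k.eq_zero_or_pos with rfl | hk
    · simp
    · rw [ih (k - 2) (by omega) hx]
  refine eqOn_Icc_of_second_order_ode hq.continuousOn h0
    (fun x _ => (h.hasDerivAt_transmutation (hasDerivAt_pow k) (by fun_prop) x).hasDerivWithinAt)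
    (fun x _ => (h.hasDerivAt_transmutationDeriv hq (hasDerivAt_pow k) (hasDerivAt_pow_deriv k)
      (by fun_prop) x).hasDerivWithinAt)
    (fun x hx => hasDerivWithinAt_formalPower hfc hne h0' k hx (hf x hx))
    (fun x hx => (hasDerivWithinAt_formalPowerDeriv hf hf' hne h0' k hx).congr_deriv
      (by rw [forcing x hx])) ?_ ?_
  · simp [formalPower_apply_zero, hf0]
  · simp [h.transmutationDeriv_zero, formalPower_apply_zero, hf0, hf'0]

end Powers

section ReflectedTransmutation

variable {q u w w' : ℝ → ℂ} {H B : ℝ → ℝ → ℂ} {b x : ℝ}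

theorem continuousOn_reflectedKernel {K : ℝ → ℝ → ℂ} (hK : Continuous ↿K) (b : ℝ) :
    ContinuousOn ↿(reflectedKernel b K) {p : ℝ × ℝ | |p.2| ≤ |p.1| ∧ |p.1| ≤ b} :=
  hK.continuousOn.congr fun _ hp => reflectedKernel_of_abs_le K hp.2 hp.1

theorem add_kernelIntegral_reflectedKernel (hH : Continuous ↿H) (hw : Continuous w)
    (hwu : EqOn w u (Set.Icc (-b) b)) (hx : x ∈ Set.Icc (-b) b) :
    u x + kernelIntegral (reflectedKernel b (characteristicKernel H)) u x =
      transmutation H w x := by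
  rw [kernelIntegral_reflectedKernel (continuous_characteristicKernel hH).uncurry_left hw hwu
    (by grind), reflectExtend_of_mem_Icc _ hx, transmutation, hwu hx]

theorem IsGoursatSolution.hasDerivAt_add_kernelIntegral_reflectedKernel
    (h : IsGoursatSolution q H B) (hb : 0 < b) (hw : ∀ x, HasDerivAt w (w' x) x)
    (hw' : Continuous w') (hwu : EqOn w u (Set.Icc (-b) b)) (hx : x ∈ Set.Icc (-b) b)
    (hu : HasDerivAt u (w' x) x) :
    HasDerivAt (fun s => u s + kernelIntegral (reflectedKernel b (characteristicKernel H)) u s)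
      (transmutationDeriv H B w w' x) x := by
  have hwc : Continuous w := continuous_iff_continuousAt.2 fun x => (hw x).continuousAt
  have eq_reflectExtend : ∀ᶠ s in 𝓝 x,
      kernelIntegral (reflectedKernel b (characteristicKernel H)) u s =
        reflectExtend (-b) b (kernelIntegral (characteristicKernel H) w) s := by
    have hlt : |x| < 2 * b := by grind
    filter_upwards [continuous_abs.continuousAt.eventually_lt_const hlt] with s hs
    exact kernelIntegral_reflectedKernel (continuous_characteristicKernel h.continuous).uncurry_left
      hwc hwu hs.le
  have integral_deriv : HasDerivAt (kernelIntegral (characteristicKernel H) w)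
      (transmutationDeriv H B w w' x - w' x) x :=
    ((h.hasDerivAt_transmutation hw hw' x).sub (hw x)).congr_of_eventuallyEq
      (.of_forall fun s => (add_sub_cancel_left (w s) _).symm)
  exact (hu.add ((hasDerivAt_reflectExtend hx integral_deriv).congr_of_eventuallyEq
    eq_reflectExtend)).congr_deriv (add_sub_cancel _ _)

theorem IsGoursatSolution.exists_hasDerivAt_twice_intertwining {Q u' u'' : ℝ → ℂ}
    (h : IsGoursatSolution Q H B) (hQ : Continuous Q) (hQq : EqOn Q q (Set.Icc (-b) b))
    (hb : 0 < b) (hu : ∀ x ∈ Set.Icc (-b) b, HasDerivAt u (u' x) x)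
    (hu' : ∀ x ∈ Set.Icc (-b) b, HasDerivAt u' (u'' x) x)
    (hu'' : ContinuousOn u'' (Set.Icc (-b) b)) :
    ∃ D1 D2 : ℝ → ℂ,
      (∀ x ∈ Set.Icc (-b) b, HasDerivAt
        (fun s => u s + kernelIntegral (reflectedKernel b (characteristicKernel H)) u s)
        (D1 x) x) ∧
      (∀ x ∈ Set.Icc (-b) b, HasDerivAt D1 (D2 x) x) ∧
      ContinuousOn D2 (Set.Icc (-b) b) ∧
      ∀ x ∈ Set.Icc (-b) b,
        D2 x - q x * (u x + kernelIntegral (reflectedKernel b (characteristicKernel H)) u x) =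
          u'' x + kernelIntegral (reflectedKernel b (characteristicKernel H)) u'' x := by
  obtain ⟨w, w', w'', hw, hw', hw'', hwu, hwu', hwu''⟩ :=
    exists_hasDerivAt_twice_eqOn_Icc (by linarith) hu hu' hu''
  have hwc : Continuous w := continuous_iff_continuousAt.2 fun x => (hw x).continuousAt
  have hwc' : Continuous w' := continuous_iff_continuousAt.2 fun x => (hw' x).continuousAt
  refine ⟨transmutationDeriv H B w w', fun x => Q x * transmutation H w x + transmutation H w'' x,
    fun x hx => h.hasDerivAt_add_kernelIntegral_reflectedKernel hb hw hwc' hwu hx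
      ((hu x hx).congr_deriv (hwu' hx).symm),
    fun x _ => h.hasDerivAt_transmutationDeriv hQ hw hw' hw'' x,
    ((hQ.mul (continuous_transmutation h.continuous hwc)).add
      (continuous_transmutation h.continuous hw'')).continuousOn, fun x hx => ?_⟩
  rw [add_kernelIntegral_reflectedKernel h.continuous hwc hwu hx,
    add_kernelIntegral_reflectedKernel h.continuous hw'' hwu'' hx, ← hQq hx, add_sub_cancel_left]

end ReflectedTransmutation

/-- the transmutation operator maps xᵏ to the formal power φₖ. -/
theorem transmutation_maps_powers_to_formal_powers
    (b : ℝ) (hb : 0 < b) (q : ℝ → ℂ) (hq : ContinuousOn q (Set.Icc (-b) b))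
    (f f' : ℝ → ℂ)
    (hf : ∀ x ∈ Set.Icc (-b) b, HasDerivAt f (f' x) x)
    (hf' : ∀ x ∈ Set.Icc (-b) b, HasDerivAt f' (q x * f x) x)
    (hf0 : f 0 = 1) (hf'0 : f' 0 = 0)
    (hfne : ∀ x ∈ Set.Icc (-b) b, f x ≠ 0) :
    ∃ K : ℝ → ℝ → ℂ,
      ContinuousOn (fun p : ℝ × ℝ => K p.1 p.2) {p : ℝ × ℝ | |p.2| ≤ |p.1| ∧ |p.1| ≤ b} ∧
      (      ∀ u u' u'' : ℝ → ℂ,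
        (∀ x ∈ Set.Icc (-b) b, HasDerivAt u (u' x) x) →
        (∀ x ∈ Set.Icc (-b) b, HasDerivAt u' (u'' x) x) →
        ContinuousOn u'' (Set.Icc (-b) b) →
        ∃ D1 D2 : ℝ → ℂ,
          (∀ x ∈ Set.Icc (-b) b,
            HasDerivAt (fun s : ℝ => u s + ∫ t in (-s)..s, K s t * u t) (D1 x) x) ∧
          (∀ x ∈ Set.Icc (-b) b, HasDerivAt D1 (D2 x) x) ∧
          ContinuousOn D2 (Set.Icc (-b) b) ∧
          ∀ x ∈ Set.Icc (-b) b,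
            D2 x - q x * (u x + ∫ t in (-x)..x, K x t * u t)
              = u'' x + ∫ t in (-x)..x, K x t * u'' t) ∧
      ∀ (k : ℕ), ∀ x ∈ Set.Icc (-b) b,
        (x : ℂ) ^ k + (∫ t in (-x)..x, K x t * (t : ℂ) ^ k) = formalPower f k x := by
  obtain ⟨Q, hQq⟩ := exists_boundedContinuous_eqOn_Icc (by linarith : -b ≤ b) hq
  obtain ⟨H, B, h⟩ := exists_isGoursatSolution Q
  refine ⟨reflectedKernel b (characteristicKernel H),
    continuousOn_reflectedKernel (continuous_characteristicKernel h.continuous) b,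
    fun u u' u'' hu hu' hu'' => h.exists_hasDerivAt_twice_intertwining Q.continuous hQq hb hu hu'
      hu'',
    fun k x hx => ?_⟩
  calc _ = transmutation H (fun t => (t : ℂ) ^ k) x :=
        add_kernelIntegral_reflectedKernel h.continuous (by fun_prop) (eqOn_refl _ _) hx
    _ = formalPower f k x :=
      h.eqOn_transmutation_pow_formalPower Q.continuous ⟨neg_lt_zero.2 hb, hb⟩
        (fun x hx => (hf x hx).hasDerivWithinAt)
        (fun x hx => (hf' x hx).hasDerivWithinAt.congr_deriv (by rw [hQq hx]))
        hf0 hf'0 hfne k hx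

end
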